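/- Let α > 0, β > 0, t₀ > 0, let Φ : H → ℝ be convex and twice continuously differentiable, and let x : [t₀, ∞) → H be a solution of (DIN-AVD). Then: (i) if (tₙ) is a sequence with tₙ → ∞ such that x(tₙ) converges weakly to some z ∈ H, then z ∈ argmin Φ; (ii) if ‖x(t)‖ does not tend to +∞ as t → ∞, then argmin Φ is nonempty. -/

import Mathlib

open Filter MeasureTheory Set
open scoped Topology RealInnerProductSpace

variable {H : Type*} [NormedAddCommGroup H] [InnerProductSpace ℝ H] [CompleteSpace H]

/-- `x`, together with its first and second derivatives `x'`, `x''`, is a twice continuously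
differentiable solution of (DIN-AVD) on `[t₀, ∞)`:
`ẍ(t) + (α/t) ẋ(t) + β ∇²Φ(x(t)) ẋ(t) + ∇Φ(x(t)) = 0`. -/
def IsDINAVDSolution (α β t₀ : ℝ) (Φ : H → ℝ) (x x' x'' : ℝ → H) : Prop :=
  (∀ t ∈ Set.Ici t₀, HasDerivAt x (x' t) t) ∧
  (∀ t ∈ Set.Ici t₀, HasDerivAt x' (x'' t) t) ∧
  ContinuousOn x'' (Set.Ici t₀) ∧
  ∀ t ∈ Set.Ici t₀,
    x'' t + (α / t) • x' t + β • (fderiv ℝ (gradient Φ) (x t)) (x' t)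
      + gradient Φ (x t) = 0

/-!
Put `v = ẋ + β∇Φ(x)`. In the pair `(x, v)` the equation becomes the first-order system
`ẋ = v - β∇Φ(x)`, `v̇ = -(α/t)ẋ - ∇Φ(x)`, in which the Hessian no longer occurs. For a fixed
comparison point `w` the energy `W = Φ(x) - Φ(w) + ‖v‖²/2` eventually satisfies
`Ẇ ≤ -(α/2)D/t` with `D = ‖v‖² + ‖ẋ‖² + ‖β∇Φ(x)‖²`.

Suppose `W ≥ ε > 0` for all large `t`. Convexity gives `⟪∇Φ(x), x - w⟫ ≥ Φ(x) - Φ(w) ≥ ε - D/2`.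
After adding a multiple of `‖x - w‖²/t²`, which cancels the damping term, and a multiple of `W`,
which absorbs all multiples of `D/t`, the function `⟪v, x - w⟫/t` has derivative at most `-ε/t`.
Since `1/t` is not integrable, `⟪v, x - w⟫/t → -∞`. This quantity dominates the derivative of
`‖x - w‖²/(2t)`, again up to multiples of `D/t`, so that this nonnegative function would tend to
`-∞`. Hence `W` falls below every `ε > 0`, and `limsup Φ(x(t)) ≤ inf Φ`.

Weak lower semicontinuity of `Φ` then makes every weak cluster point of `x` a minimizer, and if
`‖x‖` does not tend to infinity, weak compactness of balls provides such a cluster point.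
-/

open scoped Gradient

section Convex

variable {E : Type*} [NormedAddCommGroup E] [NormedSpace ℝ E] {S : Set E} {f : E → ℝ} {y z : E}

theorem add_fderiv_sub_le_of_convexOn (hf : ConvexOn ℝ S f) (hy : y ∈ S) (hz : z ∈ S)
    (hd : DifferentiableAt ℝ f y) : f y + fderiv ℝ f y (z - y) ≤ f z := by
  have hline : HasDerivAt (f ∘ AffineMap.lineMap (k := ℝ) y z) (fderiv ℝ f y (z - y)) 0 :=
    HasFDerivAt.comp_hasDerivAt (0 : ℝ) (by simpa using hd.hasFDerivAt)
      AffineMap.hasDerivAt_lineMap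
  have hslope := (hf.comp_affineMap (AffineMap.lineMap y z : ℝ →ᵃ[ℝ] E)).le_slope_of_hasDerivAt
    (x := 0) (y := 1) (by simpa using hy) (by simpa using hz) one_pos hline
  simp only [slope_def_field, Function.comp_apply, AffineMap.lineMap_apply_zero,
    AffineMap.lineMap_apply_one, sub_zero, div_one] at hslope
  linarith

theorem le_of_convexOn_of_tendsto_fderiv {ι : Type*} {l : Filter ι} [l.NeBot] {x : ι → E} {c : ℝ}
    (hf : ConvexOn ℝ univ f) (hd : DifferentiableAt ℝ f z)
    (hx : Tendsto (fun i => fderiv ℝ f z (x i)) l (𝓝 (fderiv ℝ f z z)))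
    (hc : ∀ᶠ i in l, f (x i) ≤ c) : f z ≤ c := by
  have hlim : Tendsto (fun i => f z + fderiv ℝ f z (x i - z)) l (𝓝 (f z)) := by
    simpa using (hx.sub_const (fderiv ℝ f z z)).const_add (f z)
  refine le_of_tendsto hlim ?_
  filter_upwards [hc] with i hi
  exact (add_fderiv_sub_le_of_convexOn hf (mem_univ z) (mem_univ (x i)) hd).trans hi

end Convex

section WeakCompactness

variable {ι : Type*}

theorem exists_ultrafilter_le_eventually_le {R : Type*} [LinearOrder R] {l : Filter ι} {f : ι → R}
    (hf : ¬ Tendsto f l atTop) :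
    ∃ U : Ultrafilter ι, ↑U ≤ l ∧ ∃ M, ∀ᶠ i in (U : Filter ι), f i ≤ M := by
  obtain ⟨M, hM⟩ : ∃ M, ∃ᶠ i in l, f i < M := by
    simpa only [tendsto_atTop, not_forall, not_eventually, not_le] using hf
  have : (l ⊓ 𝓟 {i | f i < M}).NeBot := frequently_mem_iff_neBot.1 hM
  obtain ⟨U, hU⟩ := Ultrafilter.exists_le (l ⊓ 𝓟 {i | f i < M})
  refine ⟨U, hU.trans inf_le_left, M, ?_⟩
  filter_upwards [le_principal_iff.1 (hU.trans inf_le_right)] with i hi using hi.le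

theorem exists_tendsto_inner_of_eventually_norm_le (U : Ultrafilter ι) {x : ι → H} {M : ℝ}
    (hx : ∀ᶠ i in (U : Filter ι), ‖x i‖ ≤ M) :
    ∃ z : H, ∀ y : H, Tendsto (fun i => ⟪x i, y⟫) U (𝓝 ⟪z, y⟫) := by
  let φ : ι → WeakDual ℝ H := fun i => StrongDual.toWeakDual (InnerProductSpace.toDual ℝ H (x i))
  have hball : ∀ᶠ i in (U : Filter ι),
      φ i ∈ WeakDual.toStrongDual ⁻¹' Metric.closedBall (0 : StrongDual ℝ H) M := by
    filter_upwards [hx] with i hi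
    simpa [φ] using hi
  obtain ⟨ξ, -, hξ : Tendsto φ U (𝓝 ξ)⟩ := (WeakDual.isCompact_closedBall (0 : StrongDual ℝ H)
    M).ultrafilter_le_nhds (U.map φ) (le_principal_iff.2 hball)
  refine ⟨(InnerProductSpace.toDual ℝ H).symm (WeakDual.toStrongDual ξ), fun y => ?_⟩
  rw [InnerProductSpace.toDual_symm_apply]
  exact ((WeakDual.eval_continuous y).tendsto ξ).comp hξ

end WeakCompactness

theorem antitoneOn_Ici_of_exists_hasDerivAt_nonpos {f : ℝ → ℝ} {T : ℝ}
    (hf : ∀ t ≥ T, ∃ d ≤ 0, HasDerivAt f d t) : AntitoneOn f (Ici T) := by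
  have hd : ∀ t ≥ T, DifferentiableAt ℝ f t := fun t ht =>
    let ⟨_, _, hd⟩ := hf t ht
    hd.differentiableAt
  refine antitoneOn_of_deriv_nonpos (convex_Ici T)
    (fun t ht => (hd t ht).continuousAt.continuousWithinAt)
    (fun t ht => (hd t (interior_subset ht)).differentiableWithinAt) fun t ht => ?_
  obtain ⟨d, hd0, hd⟩ := hf t (interior_subset ht)
  exact hd.deriv.trans_le hd0

theorem contDiff_gradient {Φ : H → ℝ} {n : WithTop ℕ∞} (hΦ : ContDiff ℝ (n + 1) Φ) :
    ContDiff ℝ n (∇ Φ) :=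
  (InnerProductSpace.toDual ℝ H).symm.toContinuousLinearEquiv.contDiff.comp
    (hΦ.fderiv_right le_rfl)

/-- The first-order form of (DIN-AVD) at time `t`, with `v` standing for `ẋ + β∇Φ(x)`. It makes
sense for `Φ` differentiable only once; for `β = 0` it is the inertial system with vanishing damping
and no Hessian term. -/
structure IsDINAVDFlowAt (α β : ℝ) (Φ : H → ℝ) (x v : ℝ → H) (t : ℝ) : Prop where
  hasDerivAt_position : HasDerivAt x (v t - β • ∇ Φ (x t)) t
  hasDerivAt_momentum :
    HasDerivAt v (-(α / t) • (v t - β • ∇ Φ (x t)) - ∇ Φ (x t)) t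

theorem IsDINAVDSolution.isDINAVDFlowAt {α β t₀ t : ℝ} {Φ : H → ℝ} {x x' x'' : ℝ → H}
    (hsol : IsDINAVDSolution α β t₀ Φ x x' x'') (hΦ : DifferentiableAt ℝ (∇ Φ) (x t))
    (ht : t₀ ≤ t) :
    IsDINAVDFlowAt α β Φ x (fun s => x' s + β • ∇ Φ (x s)) t := by
  obtain ⟨hx, hx', -, hode⟩ := hsol
  have hgrad : HasDerivAt (fun s => ∇ Φ (x s)) (fderiv ℝ (∇ Φ) (x t) (x' t)) t :=
    hΦ.hasFDerivAt.comp_hasDerivAt t (hx t ht)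
  refine ⟨by simpa using hx t ht, ((hx' t ht).add (hgrad.const_smul β)).congr_deriv ?_⟩
  rw [← sub_eq_zero, ← hode t ht, add_sub_cancel_right, neg_smul]
  abel

/-- The energy, relative to the comparison point `w`, of a state with position `p` and momentum `u`
of the first-order form of (DIN-AVD). -/
noncomputable def dinavdEnergy (Φ : H → ℝ) (w p u : H) : ℝ :=
  Φ p - Φ w + ‖u‖ ^ 2 / 2

/-- The quantity controlling the decay of `dinavdEnergy`; along a flow `u - β∇Φ(p)` is the velocity.
The summand `‖u‖²` is comparable to the other two and is included because it makes the energy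
estimate an identity up to a term of favourable sign. -/
noncomputable def dinavdDissipation (β : ℝ) (Φ : H → ℝ) (p u : H) : ℝ :=
  ‖u‖ ^ 2 + ‖u - β • ∇ Φ p‖ ^ 2 + ‖β • ∇ Φ p‖ ^ 2

section PhaseSpace

variable {β : ℝ} {Φ : H → ℝ} {w p u : H}

theorem dinavdDissipation_nonneg : 0 ≤ dinavdDissipation β Φ p u := by
  unfold dinavdDissipation
  positivity

theorem inner_momentum_velocity_eq :
    ⟪u, u - β • ∇ Φ p⟫ = dinavdDissipation β Φ p u / 2 - ‖β • ∇ Φ p‖ ^ 2 := by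
  rw [dinavdDissipation, inner_sub_right, real_inner_self_eq_norm_sq, norm_sub_sq_real]
  ring

theorem dinavdEnergy_sub_le_inner_gradient (hconv : ConvexOn ℝ univ Φ)
    (hΦ : DifferentiableAt ℝ Φ p) :
    dinavdEnergy Φ w p u - dinavdDissipation β Φ p u / 2 ≤ ⟪∇ Φ p, p - w⟫ := by
  have htangent := add_fderiv_sub_le_of_convexOn hconv (mem_univ p) (mem_univ w) hΦ
  rw [← inner_gradient_left, ← neg_sub p w, inner_neg_right] at htangent
  unfold dinavdEnergy dinavdDissipation
  linarith [sq_nonneg ‖u - β • ∇ Φ p‖, sq_nonneg ‖β • ∇ Φ p‖]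

end PhaseSpace

namespace IsDINAVDFlowAt

variable {α β ε t : ℝ} {Φ : H → ℝ} {x v : ℝ → H} {w : H}

theorem hasDerivAt_half_norm_sub_sq (h : IsDINAVDFlowAt α β Φ x v t) (w : H) :
    HasDerivAt (fun s => ‖x s - w‖ ^ 2 / 2) (⟪v t, x t - w⟫ - β * ⟪∇ Φ (x t), x t - w⟫) t := by
  refine ((h.hasDerivAt_position.sub_const w).norm_sq.div_const 2).congr_deriv ?_
  rw [mul_div_cancel_left₀ _ two_ne_zero, real_inner_comm, inner_sub_left, real_inner_smul_left]

theorem hasDerivAt_inner_sub (h : IsDINAVDFlowAt α β Φ x v t) (w : H) :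
    HasDerivAt (fun s => ⟪v s, x s - w⟫)
      (⟪v t, v t - β • ∇ Φ (x t)⟫ -
        α / t * (⟪v t, x t - w⟫ - β * ⟪∇ Φ (x t), x t - w⟫) - ⟪∇ Φ (x t), x t - w⟫) t := by
  refine (h.hasDerivAt_momentum.inner ℝ (h.hasDerivAt_position.sub_const w)).congr_deriv ?_
  simp only [inner_sub_left, real_inner_smul_left]
  ring

theorem exists_hasDerivAt_energy_le (h : IsDINAVDFlowAt α β Φ x v t)
    (hΦ : DifferentiableAt ℝ Φ (x t)) (hβ : 0 ≤ β) (ht : 0 < t) (hαβ : α * β ≤ t) :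
    ∃ d ≤ -(α / (2 * t)) * dinavdDissipation β Φ (x t) (v t),
      HasDerivAt (fun s => dinavdEnergy Φ w (x s) (v s)) d t := by
  have hpot : HasDerivAt (fun s => Φ (x s)) ⟪∇ Φ (x t), v t - β • ∇ Φ (x t)⟫ t :=
    hΦ.hasGradientAt.hasFDerivAt.comp_hasDerivAt t h.hasDerivAt_position
  refine ⟨_, ?_, (hpot.sub_const (Φ w)).add (h.hasDerivAt_momentum.norm_sq.div_const 2)⟩
  have hdamp : α * β / t * (β * ‖∇ Φ (x t)‖ ^ 2) ≤ β * ‖∇ Φ (x t)‖ ^ 2 :=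
    mul_le_of_le_one_left (by positivity) ((div_le_one ht).2 hαβ)
  calc ⟪∇ Φ (x t), v t - β • ∇ Φ (x t)⟫ +
        2 * ⟪v t, -(α / t) • (v t - β • ∇ Φ (x t)) - ∇ Φ (x t)⟫ / 2
      = -(α / t) * ⟪v t, v t - β • ∇ Φ (x t)⟫ - β * ‖∇ Φ (x t)‖ ^ 2 := by
        simp only [inner_sub_right, real_inner_smul_right, real_inner_self_eq_norm_sq]
        rw [real_inner_comm (v t)]
        ring
    _ = -(α / (2 * t)) * dinavdDissipation β Φ (x t) (v t) +
          (α * β / t * (β * ‖∇ Φ (x t)‖ ^ 2) - β * ‖∇ Φ (x t)‖ ^ 2) := by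
        rw [inner_momentum_velocity_eq, norm_smul, mul_pow, Real.norm_eq_abs, sq_abs]
        field_simp
        ring
    _ ≤ _ := by linarith

theorem exists_hasDerivAt_add_energy_le {f : ℝ → ℝ} {b : ℝ} (h : IsDINAVDFlowAt α β Φ x v t)
    (hΦ : DifferentiableAt ℝ Φ (x t)) (hα : 0 < α) (hβ : 0 ≤ β) (ht : 0 < t) (hαβ : α * β ≤ t)
    (hf : ∃ d ≤ b + (1 + β / 2) * (dinavdDissipation β Φ (x t) (v t) / t), HasDerivAt f d t) :
    ∃ d ≤ b, HasDerivAt (fun s => f s + (2 + β) / α * dinavdEnergy Φ w (x s) (v s)) d t := by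
  obtain ⟨df, hdf, hf⟩ := hf
  obtain ⟨dW, hdW, hW⟩ := h.exists_hasDerivAt_energy_le (w := w) hΦ hβ ht hαβ
  refine ⟨_, ?_, hf.add (hW.const_mul ((2 + β) / α))⟩
  calc df + (2 + β) / α * dW
      ≤ b + (1 + β / 2) * (dinavdDissipation β Φ (x t) (v t) / t) +
          (2 + β) / α * (-(α / (2 * t)) * dinavdDissipation β Φ (x t) (v t)) := by gcongr
    _ = b := by
        field_simp
        ring

-- The coefficient `α + 1` makes the terms `⟪v t, x t - w⟫ / t ^ 2` of the derivative cancel.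
theorem hasDerivAt_inner_div_add (h : IsDINAVDFlowAt α β Φ x v t) (ht : t ≠ 0) (w : H) :
    HasDerivAt (fun s => ⟪v s, x s - w⟫ / s + (α + 1) * (‖x s - w‖ ^ 2 / 2 / s ^ 2))
      ((⟪v t, v t - β • ∇ Φ (x t)⟫ - ⟪∇ Φ (x t), x t - w⟫) / t -
        β * ⟪∇ Φ (x t), x t - w⟫ / t ^ 2 - (α + 1) * ‖x t - w‖ ^ 2 / t ^ 3) t := by
  refine (((h.hasDerivAt_inner_sub w).div (hasDerivAt_id t) ht).add
    (((h.hasDerivAt_half_norm_sub_sq w).div (hasDerivAt_pow 2 t)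
      (pow_ne_zero 2 ht)).const_mul (α + 1))).congr_deriv ?_
  simp only [id]
  field_simp
  ring

theorem hasDerivAt_half_norm_sub_sq_div (h : IsDINAVDFlowAt α β Φ x v t) (ht : t ≠ 0) (w : H) :
    HasDerivAt (fun s => ‖x s - w‖ ^ 2 / 2 / s)
      (⟪v t, x t - w⟫ / t - β * ⟪∇ Φ (x t), x t - w⟫ / t - ‖x t - w‖ ^ 2 / 2 / t ^ 2) t := by
  refine ((h.hasDerivAt_half_norm_sub_sq w).div (hasDerivAt_id t) ht).congr_deriv ?_
  simp only [id]
  field_simp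

theorem exists_hasDerivAt_inner_div_add_le (h : IsDINAVDFlowAt α β Φ x v t)
    (hconv : ConvexOn ℝ univ Φ) (hΦ : DifferentiableAt ℝ Φ (x t)) (hα : 0 ≤ α) (hβ : 0 ≤ β)
    (ht : 1 ≤ t) (hε : 0 ≤ ε) (hW : ε ≤ dinavdEnergy Φ w (x t) (v t)) :
    ∃ d ≤ -(ε * t⁻¹) + (1 + β / 2) * (dinavdDissipation β Φ (x t) (v t) / t),
      HasDerivAt (fun s => ⟪v s, x s - w⟫ / s + (α + 1) * (‖x s - w‖ ^ 2 / 2 / s ^ 2)) d t := by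
  have ht0 : 0 < t := one_pos.trans_le ht
  refine ⟨_, ?_, h.hasDerivAt_inner_div_add ht0.ne' w⟩
  have hm := dinavdEnergy_sub_le_inner_gradient (β := β) (w := w) (u := v t) hconv hΦ
  set D := dinavdDissipation β Φ (x t) (v t)
  set m := ⟪∇ Φ (x t), x t - w⟫
  have hD : 0 ≤ D := dinavdDissipation_nonneg
  have hkin : ⟪v t, v t - β • ∇ Φ (x t)⟫ ≤ D / 2 := by
    rw [inner_momentum_velocity_eq]
    exact sub_le_self _ (sq_nonneg _)
  have hmain : (⟪v t, v t - β • ∇ Φ (x t)⟫ - m) / t ≤ (D - ε) / t := by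
    gcongr ?_ / t
    linarith
  have hhessian : β * (-m) / t ^ 2 ≤ β * (D / 2) / t := by
    gcongr
    · linarith
    · exact le_self_pow₀ ht two_ne_zero
  have hanchor : 0 ≤ (α + 1) * ‖x t - w‖ ^ 2 / t ^ 3 := by positivity
  calc (⟪v t, v t - β • ∇ Φ (x t)⟫ - m) / t - β * m / t ^ 2 - (α + 1) * ‖x t - w‖ ^ 2 / t ^ 3
      = (⟪v t, v t - β • ∇ Φ (x t)⟫ - m) / t + β * (-m) / t ^ 2 -
          (α + 1) * ‖x t - w‖ ^ 2 / t ^ 3 := by ring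
    _ ≤ (D - ε) / t + β * (D / 2) / t := by linarith
    _ = -(ε * t⁻¹) + (1 + β / 2) * (D / t) := by ring

theorem exists_hasDerivAt_half_norm_sub_sq_div_le (h : IsDINAVDFlowAt α β Φ x v t)
    (hconv : ConvexOn ℝ univ Φ) (hΦ : DifferentiableAt ℝ Φ (x t)) (hβ : 0 ≤ β) (ht : 0 < t)
    (hW : 0 ≤ dinavdEnergy Φ w (x t) (v t)) :
    ∃ d ≤ ⟪v t, x t - w⟫ / t + (1 + β / 2) * (dinavdDissipation β Φ (x t) (v t) / t),
      HasDerivAt (fun s => ‖x s - w‖ ^ 2 / 2 / s) d t := by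
  refine ⟨_, ?_, h.hasDerivAt_half_norm_sub_sq_div ht.ne' w⟩
  have hm := dinavdEnergy_sub_le_inner_gradient (β := β) (w := w) (u := v t) hconv hΦ
  set D := dinavdDissipation β Φ (x t) (v t)
  set m := ⟪∇ Φ (x t), x t - w⟫
  have hD : 0 ≤ D / t := div_nonneg dinavdDissipation_nonneg ht.le
  have hhessian : β * (-m) / t ≤ β * (D / 2) / t := by
    gcongr
    linarith
  have hanchor : 0 ≤ ‖x t - w‖ ^ 2 / 2 / t ^ 2 := by positivity
  calc ⟪v t, x t - w⟫ / t - β * m / t - ‖x t - w‖ ^ 2 / 2 / t ^ 2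
      = ⟪v t, x t - w⟫ / t + β * (-m) / t - ‖x t - w‖ ^ 2 / 2 / t ^ 2 := by ring
    _ ≤ ⟪v t, x t - w⟫ / t + β * (D / 2) / t + D / t := by linarith
    _ = ⟪v t, x t - w⟫ / t + (1 + β / 2) * (D / t) := by ring

end IsDINAVDFlowAt

section Asymptotics

variable {α β ε : ℝ} {Φ : H → ℝ} {x v : ℝ → H}

theorem tendsto_inner_div_atBot (hα : 0 < α) (hβ : 0 ≤ β) (hconv : ConvexOn ℝ univ Φ)
    (hΦ : Differentiable ℝ Φ) (hflow : ∀ᶠ t in atTop, IsDINAVDFlowAt α β Φ x v t) {w : H}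
    (hε : 0 < ε) (hW : ∀ᶠ t in atTop, ε ≤ dinavdEnergy Φ w (x t) (v t)) :
    Tendsto (fun t => ⟪v t, x t - w⟫ / t) atTop atBot := by
  obtain ⟨T, hT⟩ := eventually_atTop.1 <| hflow.and <| hW.and <|
    (eventually_ge_atTop 1).and (eventually_ge_atTop (α * β))
  let F : ℝ → ℝ := fun t => ⟪v t, x t - w⟫ / t + (α + 1) * (‖x t - w‖ ^ 2 / 2 / t ^ 2) +
    (2 + β) / α * dinavdEnergy Φ w (x t) (v t) + ε * Real.log t
  have hF : AntitoneOn F (Ici T) := by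
    refine antitoneOn_Ici_of_exists_hasDerivAt_nonpos fun t ht => ?_
    obtain ⟨h, hWt, ht1, hαβ⟩ := hT t ht
    have ht0 : 0 < t := one_pos.trans_le ht1
    obtain ⟨d, hd, hderiv⟩ := h.exists_hasDerivAt_add_energy_le (w := w) (hΦ (x t)) hα hβ ht0 hαβ
      (h.exists_hasDerivAt_inner_div_add_le hconv (hΦ (x t)) hα.le hβ ht1 hε.le hWt)
    exact ⟨_, by linarith, hderiv.add ((Real.hasDerivAt_log ht0.ne').const_mul ε)⟩
  have hlog : Tendsto (fun t => F T - ε * Real.log t) atTop atBot :=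
    tendsto_atBot_add_const_left _ _
      (tendsto_neg_atTop_atBot.comp (Real.tendsto_log_atTop.const_mul_atTop hε))
  refine tendsto_atBot_mono' _ ?_ hlog
  filter_upwards [eventually_ge_atTop T] with t ht
  have hWt : 0 ≤ dinavdEnergy Φ w (x t) (v t) := hε.le.trans (hT t ht).2.1
  have hrest : 0 ≤ (α + 1) * (‖x t - w‖ ^ 2 / 2 / t ^ 2) +
    (2 + β) / α * dinavdEnergy Φ w (x t) (v t) := by positivity
  have hFt : F t ≤ F T := hF self_mem_Ici ht ht
  simp only [F] at hFt ⊢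
  linarith

theorem frequently_energy_lt (hα : 0 < α) (hβ : 0 ≤ β) (hconv : ConvexOn ℝ univ Φ)
    (hΦ : Differentiable ℝ Φ) (hflow : ∀ᶠ t in atTop, IsDINAVDFlowAt α β Φ x v t) (w : H)
    (hε : 0 < ε) : ∃ᶠ t in atTop, dinavdEnergy Φ w (x t) (v t) < ε := by
  intro hlow
  have hW : ∀ᶠ t in atTop, ε ≤ dinavdEnergy Φ w (x t) (v t) := hlow.mono fun _ => not_lt.1
  obtain ⟨T, hT⟩ := eventually_atTop.1 <| hflow.and <| hW.and <| (eventually_gt_atTop 0).and <|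
    (eventually_ge_atTop (α * β)).and <|
    (tendsto_inner_div_atBot hα hβ hconv hΦ hflow hε hW).eventually_le_atBot (-1)
  let G : ℝ → ℝ := fun t => ‖x t - w‖ ^ 2 / 2 / t +
    (2 + β) / α * dinavdEnergy Φ w (x t) (v t) + t
  have hG : AntitoneOn G (Ici T) := by
    refine antitoneOn_Ici_of_exists_hasDerivAt_nonpos fun t ht => ?_
    obtain ⟨h, hWt, ht0, hαβ, hle⟩ := hT t ht
    obtain ⟨d, hd, hderiv⟩ := h.exists_hasDerivAt_add_energy_le (w := w) (hΦ (x t)) hα hβ ht0 hαβ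
      (h.exists_hasDerivAt_half_norm_sub_sq_div_le hconv (hΦ (x t)) hβ ht0 (hε.le.trans hWt))
    exact ⟨_, by linarith, hderiv.add (hasDerivAt_id t)⟩
  have hbound : ∀ t ≥ T, t ≤ G T := fun t ht => by
    obtain ⟨-, hWt, ht0, -⟩ := hT t ht
    have hWt0 : 0 ≤ dinavdEnergy Φ w (x t) (v t) := hε.le.trans hWt
    exact (le_add_of_nonneg_left (by positivity)).trans (hG self_mem_Ici ht ht)
  obtain ⟨t, htT, htG⟩ := ((eventually_ge_atTop T).and (eventually_gt_atTop (G T))).exists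
  exact (hbound t htT).not_gt htG

theorem eventually_lt_of_isDINAVDFlowAt (hα : 0 < α) (hβ : 0 ≤ β) (hconv : ConvexOn ℝ univ Φ)
    (hΦ : Differentiable ℝ Φ) (hflow : ∀ᶠ t in atTop, IsDINAVDFlowAt α β Φ x v t) {w : H} {c : ℝ}
    (hc : Φ w < c) : ∀ᶠ t in atTop, Φ (x t) < c := by
  obtain ⟨T, hT⟩ := eventually_atTop.1 <| hflow.and <|
    (eventually_gt_atTop 0).and (eventually_ge_atTop (α * β))
  have hanti : AntitoneOn (fun t => dinavdEnergy Φ w (x t) (v t)) (Ici T) := by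
    refine antitoneOn_Ici_of_exists_hasDerivAt_nonpos fun t ht => ?_
    obtain ⟨h, ht0, hαβ⟩ := hT t ht
    obtain ⟨d, hd, hderiv⟩ := h.exists_hasDerivAt_energy_le (w := w) (hΦ (x t)) hβ ht0 hαβ
    refine ⟨d, hd.trans (mul_nonpos_of_nonpos_of_nonneg ?_ dinavdDissipation_nonneg), hderiv⟩
    exact neg_nonpos.2 (by positivity)
  obtain ⟨s, hs, hsW⟩ := ((frequently_energy_lt hα hβ hconv hΦ hflow w
    (sub_pos.2 hc)).and_eventually (eventually_ge_atTop T)).exists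
  filter_upwards [eventually_ge_atTop s] with t hst
  have hWt := (hanti hsW (hsW.trans hst) hst).trans_lt hs
  unfold dinavdEnergy at hWt
  linarith [sq_nonneg ‖v t‖]

theorem le_of_tendsto_inner_of_isDINAVDFlowAt (hα : 0 < α) (hβ : 0 ≤ β)
    (hconv : ConvexOn ℝ univ Φ) (hΦ : Differentiable ℝ Φ)
    (hflow : ∀ᶠ t in atTop, IsDINAVDFlowAt α β Φ x v t) {l : Filter ℝ} [l.NeBot] (hl : l ≤ atTop)
    {z : H} (hz : ∀ y : H, Tendsto (fun t => ⟪x t, y⟫) l (𝓝 ⟪z, y⟫)) (w : H) : Φ z ≤ Φ w := by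
  have hweak : Tendsto (fun t => fderiv ℝ Φ z (x t)) l (𝓝 (fderiv ℝ Φ z z)) := by
    simpa only [← inner_gradient_left, real_inner_comm (∇ Φ z)] using hz (∇ Φ z)
  refine le_of_forall_gt_imp_ge_of_dense fun c hc => ?_
  refine le_of_convexOn_of_tendsto_fderiv hconv (hΦ z) hweak ?_
  exact hl ((eventually_lt_of_isDINAVDFlowAt hα hβ hconv hΦ hflow hc).mono fun _ => le_of_lt)

end Asymptotics

theorem stmt2_general {α β : ℝ} (hα : 0 < α) (hβ : 0 ≤ β) {Φ : H → ℝ}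
    (hconv : ConvexOn ℝ univ Φ) (hΦ : Differentiable ℝ Φ) {x v : ℝ → H}
    (hflow : ∀ᶠ t in atTop, IsDINAVDFlowAt α β Φ x v t) :
    (∀ (tseq : ℕ → ℝ) (z : H), Tendsto tseq atTop atTop →
      (∀ y : H, Tendsto (fun n => ⟪x (tseq n), y⟫) atTop (𝓝 ⟪z, y⟫)) →
      ∀ w : H, Φ z ≤ Φ w) ∧
    (¬ Tendsto (fun t => ‖x t‖) atTop atTop → ∃ z : H, ∀ w : H, Φ z ≤ Φ w) := by
  refine ⟨fun tseq z htseq hz => ?_, fun hnorm => ?_⟩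
  · exact le_of_tendsto_inner_of_isDINAVDFlowAt hα hβ hconv hΦ hflow htseq
      fun y => tendsto_map'_iff.2 (hz y)
  · obtain ⟨U, hU, M, hM⟩ := exists_ultrafilter_le_eventually_le hnorm
    obtain ⟨z, hz⟩ := exists_tendsto_inner_of_eventually_norm_le U hM
    exact ⟨z, le_of_tendsto_inner_of_isDINAVDFlowAt hα hβ hconv hΦ hflow hU hz⟩

theorem stmt2 (α β t₀ : ℝ) (hα : 0 < α) (hβ : 0 < β) (ht₀ : 0 < t₀)
    (Φ : H → ℝ) (hconv : ConvexOn ℝ Set.univ Φ) (hΦ : ContDiff ℝ 2 Φ)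
    (x x' x'' : ℝ → H) (hsol : IsDINAVDSolution α β t₀ Φ x x' x'') :
    (∀ (tseq : ℕ → ℝ) (z : H), Tendsto tseq atTop atTop →
      (∀ y : H, Tendsto (fun n => ⟪x (tseq n), y⟫) atTop (𝓝 ⟪z, y⟫)) →
      ∀ w : H, Φ z ≤ Φ w) ∧
    (¬ Tendsto (fun t => ‖x t‖) atTop atTop → ∃ z : H, ∀ w : H, Φ z ≤ Φ w) :=
  stmt2_general hα hβ.le hconv (hΦ.differentiable two_ne_zero) <| (eventually_ge_atTop t₀).mono
    fun t => hsol.isDINAVDFlowAt ((contDiff_gradient (n := 1) hΦ).differentiable one_ne_zero (x t))
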